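/- arXiv:2009.02812 — 2 statements merged into one kernel-verified Lean document; each statement's English description precedes it below -/
import Mathlib

section
/- In H_k set W_1 = T_1^{−1}T_2^{−1}⋯T_{k−1}^{−1}T_kT_{k−1}⋯T_2T_1T_0, T_{0^∨} = W_1T_0^{−1}, and T_{w_A} = (T_1)(T_2T_1)(T_3T_2T_1)⋯(T_{k−1}T_{k−2}⋯T_1). Then: (i) (T_{0^∨} − t_k^{1/2})(T_{0^∨} + t_k^{−1/2}) = 0; (ii) T_{0^∨}T_1T_{0^∨}T_1 = T_1T_{0^∨}T_1T_{0^∨}; (iii) T_{w_A}^{−1}T_kT_{w_A} = T_{0^∨}; and (iv) T_{w_A}^{−1}T_{k−1}T_{w_A} = T_1. -/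
noncomputable section

open scoped BigOperators

namespace TwoBoundaryTL

variable (k : ℕ) (u u0 uk a a0 ak : ℂ)

/-- The free algebra on generators `T_i`, `i : ℕ` (only `i ≤ k` are used). -/
abbrev FA := FreeAlgebra ℂ ℕ

/-- The `i`-th generator of the free algebra. -/
def g (i : ℕ) : FA := FreeAlgebra.ι ℂ i

/-- Scalars in the free algebra. -/
def cst (z : ℂ) : FA := algebraMap ℂ FA z

/-- The defining relations of the two-boundary Hecke algebra `H_k`, with parameters
`u = t^{1/2}`, `u0 = t_0^{1/2}`, `uk = t_k^{1/2}`. -/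
inductive HeckeRel : FA → FA → Prop
  | quad0 : HeckeRel ((g 0 - cst u0) * (g 0 + cst u0⁻¹)) 0
  | quad (i : ℕ) (h1 : 1 ≤ i) (h2 : i ≤ k - 1) :
      HeckeRel ((g i - cst u) * (g i + cst u⁻¹)) 0
  | quadk : HeckeRel ((g k - cst uk) * (g k + cst uk⁻¹)) 0
  | braid0 : HeckeRel (g 0 * g 1 * g 0 * g 1) (g 1 * g 0 * g 1 * g 0)
  | braidk : HeckeRel (g (k-1) * g k * g (k-1) * g k) (g k * g (k-1) * g k * g (k-1))
  | braid (i : ℕ) (h1 : 1 ≤ i) (h2 : i ≤ k - 2) :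
      HeckeRel (g i * g (i+1) * g i) (g (i+1) * g i * g (i+1))
  | comm (i j : ℕ) (hij : i < j) (hj : j ≤ k) (h : 2 ≤ j - i) :
      HeckeRel (g i * g j) (g j * g i)

/-- The two-boundary Hecke algebra `H_k`. -/
def Hecke := RingQuot (HeckeRel k u u0 uk)

instance : Ring (Hecke k u u0 uk) :=
  inferInstanceAs (Ring (RingQuot (HeckeRel k u u0 uk)))

instance : Algebra ℂ (Hecke k u u0 uk) :=
  inferInstanceAs (Algebra ℂ (RingQuot (HeckeRel k u u0 uk)))

/-- The generator `T_i` of `H_k`. -/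
def T (i : ℕ) : Hecke k u u0 uk := RingQuot.mkAlgHom ℂ (HeckeRel k u u0 uk) (g i)

/-- Scalars in `H_k`. -/
def hc (z : ℂ) : Hecke k u u0 uk := algebraMap ℂ (Hecke k u u0 uk) z

/-- The inverse of `T_i`, given by the explicit formulas
`T_0⁻¹ = T_0 - (t_0^{1/2} - t_0^{-1/2})`, `T_i⁻¹ = T_i - (t^{1/2} - t^{-1/2})`,
`T_k⁻¹ = T_k - (t_k^{1/2} - t_k^{-1/2})`. -/
def Tinv (i : ℕ) : Hecke k u u0 uk :=
  if i = 0 then T k u u0 uk 0 - hc k u u0 uk (u0 - u0⁻¹)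
  else if i = k then T k u u0 uk k - hc k u u0 uk (uk - uk⁻¹)
  else T k u u0 uk i - hc k u u0 uk (u - u⁻¹)

/-- The elements `e_0 = a_0⁻¹(T_0 - t_0^{1/2})`, `e_i = a⁻¹(T_i - t^{1/2})` for `1 ≤ i ≤ k-1`,
`e_k = a_k⁻¹(T_k - t_k^{1/2})`. -/
def e (i : ℕ) : Hecke k u u0 uk :=
  if i = 0 then a0⁻¹ • (T k u u0 uk 0 - hc k u u0 uk u0)
  else if i = k then ak⁻¹ • (T k u u0 uk k - hc k u u0 uk uk)
  else a⁻¹ • (T k u u0 uk i - hc k u u0 uk u)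

/-- `W_1 = T_1⁻¹ T_2⁻¹ ⋯ T_{k-1}⁻¹ T_k T_{k-1} ⋯ T_2 T_1 T_0`. -/
def W1 : Hecke k u u0 uk :=
  ((List.range (k-1)).map (fun j => Tinv k u u0 uk (j+1))).prod *
    T k u u0 uk k *
    ((List.range (k-1)).reverse.map (fun j => T k u u0 uk (j+1))).prod *
    T k u u0 uk 0

/-- The Murphy elements: `W_j = T_j W_{j-1} T_j` for `2 ≤ j ≤ k`. -/
def W : ℕ → Hecke k u u0 uk
  | 0 => 1
  | 1 => W1 k u u0 uk
  | j + 2 => T k u u0 uk (j + 2) * W (j + 1) * T k u u0 uk (j + 2)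

/-- `W_1⁻¹ = T_0⁻¹ T_1⁻¹ ⋯ T_{k-1}⁻¹ T_k⁻¹ T_{k-1} ⋯ T_1`. -/
def W1inv : Hecke k u u0 uk :=
  Tinv k u u0 uk 0 *
    ((List.range (k-1)).map (fun j => Tinv k u u0 uk (j+1))).prod *
    Tinv k u u0 uk k *
    ((List.range (k-1)).reverse.map (fun j => T k u u0 uk (j+1))).prod

/-- The inverses of the Murphy elements. -/
def Winv : ℕ → Hecke k u u0 uk
  | 0 => 1
  | 1 => W1inv k u u0 uk
  | j + 2 => Tinv k u u0 uk (j + 2) * Winv (j + 1) * Tinv k u u0 uk (j + 2)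

/-- The central element `Z = W_1 + W_1⁻¹ + ⋯ + W_k + W_k⁻¹`. -/
def Z : Hecke k u u0 uk :=
  ∑ j ∈ Finset.range k, (W k u u0 uk (j + 1) + Winv k u u0 uk (j + 1))

/-- The relations defining the two-boundary Temperley–Lieb algebra as a quotient of `H_k`. -/
inductive TLRel : Hecke k u u0 uk → Hecke k u u0 uk → Prop
  | braidA (i : ℕ) (h1 : 1 ≤ i) (h2 : i ≤ k - 2) :
      TLRel ((a ^ 3) • (e k u u0 uk a a0 ak i * e k u u0 uk a a0 ak (i+1) * e k u u0 uk a a0 ak i)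
        - a • e k u u0 uk a a0 ak i) 0
  | braidB (i : ℕ) (h1 : 1 ≤ i) (h2 : i ≤ k - 2) :
      TLRel ((a ^ 3) • (e k u u0 uk a a0 ak (i+1) * e k u u0 uk a a0 ak i * e k u u0 uk a a0 ak (i+1))
        - a • e k u u0 uk a a0 ak (i+1)) 0
  | bd0 :
      TLRel ((a0 * a ^ 2) • (e k u u0 uk a a0 ak 1 * e k u u0 uk a a0 ak 0 * e k u u0 uk a a0 ak 1)
        - (a * (u0⁻¹ * u + u0 * u⁻¹)) • e k u u0 uk a a0 ak 1) 0
  | bdk :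
      TLRel ((ak * a ^ 2) • (e k u u0 uk a a0 ak (k-1) * e k u u0 uk a a0 ak k * e k u u0 uk a a0 ak (k-1))
        - (a * (uk⁻¹ * u + uk * u⁻¹)) • e k u u0 uk a a0 ak (k-1)) 0

/-- The two-boundary Temperley–Lieb algebra `TL_k`. -/
def TL := RingQuot (TLRel k u u0 uk a a0 ak)

instance : Ring (TL k u u0 uk a a0 ak) :=
  inferInstanceAs (Ring (RingQuot (TLRel k u u0 uk a a0 ak)))

instance : Algebra ℂ (TL k u u0 uk a a0 ak) :=
  inferInstanceAs (Algebra ℂ (RingQuot (TLRel k u u0 uk a a0 ak)))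

/-- The quotient map `H_k → TL_k`. -/
def π : Hecke k u u0 uk →ₐ[ℂ] TL k u u0 uk a a0 ak :=
  RingQuot.mkAlgHom ℂ (TLRel k u u0 uk a a0 ak)

/-- `I_1 = (ae_1)(ae_3)⋯(ae_{k-1})` for `k` even, `(ae_1)(ae_3)⋯(ae_{k-2})e_k` for `k` odd. -/
def I1 : Hecke k u u0 uk :=
  if k % 2 = 0 then
    ((List.range (k / 2)).map (fun j => a • e k u u0 uk a a0 ak (2*j+1))).prod
  else
    ((List.range ((k-1) / 2)).map (fun j => a • e k u u0 uk a a0 ak (2*j+1))).prod *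
      e k u u0 uk a a0 ak k

/-- `I_2 = e_0(ae_2)(ae_4)⋯(ae_{k-2})e_k` for `k` even, `e_0(ae_2)(ae_4)⋯(ae_{k-1})` for `k` odd. -/
def I2 : Hecke k u u0 uk :=
  if k % 2 = 0 then
    e k u u0 uk a a0 ak 0 *
      ((List.range (k / 2 - 1)).map (fun j => a • e k u u0 uk a a0 ak (2*j+2))).prod *
      e k u u0 uk a a0 ak k
  else
    e k u u0 uk a a0 ak 0 *
      ((List.range ((k-1) / 2)).map (fun j => a • e k u u0 uk a a0 ak (2*j+2))).prod

/-- The quantum integer `[k] = (t^{1/2})^{-(k-1)}(1 + t + ⋯ + t^{k-1})`. -/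
def qk : ℂ := (u⁻¹) ^ (k - 1) * ∑ j ∈ Finset.range k, (u ^ 2) ^ j

/-!
Everything is conjugation by `A = T_{w_A}`. Write `D_m = T_m ⋯ T_1`, so that `A = D_1 ⋯ D_{k-1}`.
The braid relations give `D_m T_{j+1} = T_j D_m`, whence `D_m² = D_{m-1} D_m T_1` and
`A T_1 = T_{k-1} A`. On the other hand `T_{0^∨} = D_{k-1}⁻¹ T_k D_{k-1}`, and `T_k` commutes with
`D_1 ⋯ D_{k-2}`, so `A T_{0^∨} = T_k A`. As `A` is invertible, the relations between `T_k` and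
`T_{k-1}` carry over to `T_{0^∨}` and `T_1`.
-/

section Monoid

variable {M : Type*} [Monoid M] {s t : ℕ → M}

/-- The product `s 1 * s 2 * ⋯ * s n`, the left factor of `W_1` when `s i = T_i⁻¹`, `n = k - 1`. -/
def ascProd (s : ℕ → M) (n : ℕ) : M := ((List.range n).map fun j => s (j + 1)).prod

/-- The product `t n * ⋯ * t 2 * t 1`, a block of `T_{w_A}` when `t = T`. -/
def descProd (t : ℕ → M) (n : ℕ) : M := ((List.range n).reverse.map fun j => t (j + 1)).prod

/-- The half twist `(t 1) * (t 2 * t 1) * ⋯ * (t n * ⋯ * t 2 * t 1)`, the lift of the longest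
element of the symmetric group on `n + 1` letters; `T_{w_A}` is the case `t = T`, `n = k - 1`. -/
def halfTwist (t : ℕ → M) (n : ℕ) : M := ((List.range n).map fun m => descProd t (m + 1)).prod

/-- The product `(s 1 * s 2 * ⋯ * s n) * ⋯ * (s 1 * s 2) * (s 1)`, which is the inverse of the half
twist of `t` when `s i` is the inverse of `t i`. -/
def halfTwistInv (s : ℕ → M) (n : ℕ) : M :=
  ((List.range n).reverse.map fun m => ascProd s (m + 1)).prod

/-- The elements `t 1, …, t n` satisfy the defining relations of the braid group on `n + 1`
strands. -/
structure BraidRelations (t : ℕ → M) (n : ℕ) : Prop where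
  commute {i j : ℕ} : 1 ≤ i → i + 2 ≤ j → j ≤ n → Commute (t i) (t j)
  braid {i : ℕ} : 1 ≤ i → i + 1 ≤ n → t i * t (i + 1) * t i = t (i + 1) * t i * t (i + 1)

theorem ascProd_zero (s : ℕ → M) : ascProd s 0 = 1 := rfl

theorem ascProd_succ (s : ℕ → M) (n : ℕ) : ascProd s (n + 1) = ascProd s n * s (n + 1) := by
  simp [ascProd, List.range_succ]

theorem descProd_zero (t : ℕ → M) : descProd t 0 = 1 := rfl

theorem descProd_succ (t : ℕ → M) (n : ℕ) : descProd t (n + 1) = t (n + 1) * descProd t n := by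
  simp [descProd, List.range_succ]

theorem halfTwist_zero (t : ℕ → M) : halfTwist t 0 = 1 := rfl

theorem halfTwist_succ (t : ℕ → M) (n : ℕ) :
    halfTwist t (n + 1) = halfTwist t n * descProd t (n + 1) := by
  simp [halfTwist, List.range_succ]

theorem halfTwistInv_zero (s : ℕ → M) : halfTwistInv s 0 = 1 := rfl

theorem halfTwistInv_succ (s : ℕ → M) (n : ℕ) :
    halfTwistInv s (n + 1) = ascProd s (n + 1) * halfTwistInv s n := by
  simp [halfTwistInv, List.range_succ]

theorem mul_mul_mul_eq_one {a b c d : M} (hbc : b * c = 1) (had : a * d = 1) :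
    a * b * (c * d) = 1 := by
  rw [mul_assoc, ← mul_assoc b, hbc, one_mul, had]

theorem ascProd_mul_descProd {n : ℕ} (h : ∀ i, 1 ≤ i → i ≤ n → s i * t i = 1) :
    ascProd s n * descProd t n = 1 := by
  induction n with
  | zero => rw [ascProd_zero, descProd_zero, one_mul]
  | succ n ih =>
    rw [ascProd_succ, descProd_succ]
    exact mul_mul_mul_eq_one (h _ n.succ_pos le_rfl) (ih fun i h₁ hn => h i h₁ (by omega))

theorem descProd_mul_ascProd {n : ℕ} (h : ∀ i, 1 ≤ i → i ≤ n → t i * s i = 1) :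
    descProd t n * ascProd s n = 1 := by
  induction n with
  | zero => rw [ascProd_zero, descProd_zero, one_mul]
  | succ n ih =>
    rw [ascProd_succ, descProd_succ]
    exact mul_mul_mul_eq_one (ih fun i h₁ hn => h i h₁ (by omega)) (h _ n.succ_pos le_rfl)

theorem halfTwistInv_mul_halfTwist {n : ℕ} (h : ∀ i, 1 ≤ i → i ≤ n → s i * t i = 1) :
    halfTwistInv s n * halfTwist t n = 1 := by
  induction n with
  | zero => rw [halfTwistInv_zero, halfTwist_zero, one_mul]
  | succ n ih =>
    rw [halfTwistInv_succ, halfTwist_succ]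
    exact mul_mul_mul_eq_one (ih fun i h₁ hn => h i h₁ (by omega)) (ascProd_mul_descProd h)

theorem commute_descProd {x : M} {n : ℕ} (h : ∀ i, 1 ≤ i → i ≤ n → Commute (t i) x) :
    Commute (descProd t n) x := by
  induction n with
  | zero => exact Commute.one_left x
  | succ n ih =>
    rw [descProd_succ]
    exact (h _ n.succ_pos le_rfl).mul_left (ih fun i h₁ hn => h i h₁ (by omega))

theorem commute_halfTwist {x : M} {n : ℕ} (h : ∀ i, 1 ≤ i → i ≤ n → Commute (t i) x) :
    Commute (halfTwist t n) x := by
  induction n with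
  | zero => exact Commute.one_left x
  | succ n ih =>
    rw [halfTwist_succ]
    exact (ih fun i h₁ hn => h i h₁ (by omega)).mul_left (commute_descProd h)

namespace BraidRelations

variable {n : ℕ}

theorem semiconjBy_descProd (ht : BraidRelations t n) {m j : ℕ} (hm : m ≤ n) (hj : 1 ≤ j)
    (hjm : j + 1 ≤ m) : SemiconjBy (descProd t m) (t (j + 1)) (t j) := by
  induction m, hjm using Nat.le_induction with
  | base =>
    obtain ⟨i, rfl⟩ : ∃ i, j = i + 1 := ⟨j - 1, by omega⟩
    have hcomm : Commute (descProd t i) (t (i + 1 + 1)) :=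
      commute_descProd fun _ h₁ hi => ht.commute h₁ (by omega) hm
    calc descProd t (i + 1 + 1) * t (i + 1 + 1)
        = t (i + 1 + 1) * t (i + 1) * (descProd t i * t (i + 1 + 1)) := by
          simp only [descProd_succ, mul_assoc]
      _ = t (i + 1 + 1) * t (i + 1) * t (i + 1 + 1) * descProd t i := by
          rw [hcomm.eq, mul_assoc _ (t (i + 1 + 1))]
      _ = t (i + 1) * t (i + 1 + 1) * t (i + 1) * descProd t i := by rw [ht.braid hj hm]
      _ = t (i + 1) * descProd t (i + 1 + 1) := by simp only [descProd_succ, mul_assoc]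
  | succ m hjm ih =>
    rw [descProd_succ]
    exact SemiconjBy.mul_left (ht.commute hj (by omega) hm).symm (ih (by omega))

theorem descProd_mul_descProd (ht : BraidRelations t n) {m j : ℕ} (hm : m ≤ n)
    (hjm : j + 1 ≤ m) :
    descProd t m * descProd t (j + 1) = descProd t j * descProd t m * t 1 := by
  induction j with
  | zero => rw [descProd_succ, descProd_zero, mul_one, one_mul]
  | succ j ih =>
    calc descProd t m * descProd t (j + 1 + 1)
        = descProd t m * t (j + 1 + 1) * descProd t (j + 1) := by
          rw [descProd_succ t (j + 1), mul_assoc]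
      _ = t (j + 1) * (descProd t m * descProd t (j + 1)) := by
          rw [(ht.semiconjBy_descProd hm j.succ_pos hjm).eq, mul_assoc]
      _ = descProd t (j + 1) * descProd t m * t 1 := by
          rw [ih (by omega), descProd_succ t j]
          simp only [mul_assoc]

theorem semiconjBy_halfTwist (ht : BraidRelations t n) (hn : 1 ≤ n) :
    SemiconjBy (halfTwist t n) (t 1) (t n) := by
  obtain ⟨m, rfl⟩ : ∃ m, n = m + 1 := ⟨n - 1, by omega⟩
  cases m with
  | zero => simp [halfTwist_succ, halfTwist_zero, descProd_succ, descProd_zero, SemiconjBy]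
  | succ m =>
    have hcomm : Commute (halfTwist t m) (t (m + 1 + 1)) :=
      commute_halfTwist fun _ h₁ hi => ht.commute h₁ (by omega) le_rfl
    calc halfTwist t (m + 1 + 1) * t 1
        = halfTwist t m * (descProd t (m + 1) * descProd t (m + 1 + 1) * t 1) := by
          simp only [halfTwist_succ, mul_assoc]
      _ = halfTwist t m * (descProd t (m + 1 + 1) * descProd t (m + 1 + 1)) := by
          rw [ht.descProd_mul_descProd le_rfl le_rfl]
      _ = halfTwist t m * t (m + 1 + 1) * descProd t (m + 1) * descProd t (m + 1 + 1) := by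
          nth_rw 1 [descProd_succ t (m + 1)]
          simp only [mul_assoc]
      _ = t (m + 1 + 1) * halfTwist t (m + 1 + 1) := by
          rw [hcomm.eq]
          simp only [halfTwist_succ, mul_assoc]

end BraidRelations

theorem semiconjBy_halfTwist_ascProd_mul_mul_descProd {x : M} {n : ℕ}
    (hts : ∀ i, 1 ≤ i → i ≤ n → t i * s i = 1)
    (hx : ∀ i, 1 ≤ i → i + 1 ≤ n → Commute (t i) x) :
    SemiconjBy (halfTwist t n) (ascProd s n * x * descProd t n) x := by
  have hdesc : SemiconjBy (descProd t n) (ascProd s n * x * descProd t n) x := by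
    rw [SemiconjBy, ← mul_assoc, ← mul_assoc, descProd_mul_ascProd hts, one_mul]
  cases n with
  | zero => exact hdesc
  | succ n =>
    rw [halfTwist_succ]
    exact SemiconjBy.mul_left (commute_halfTwist fun i h₁ hi => hx i h₁ (by omega)) hdesc

theorem conj_eq_of_semiconjBy {a b x y : M} (hba : b * a = 1) (h : SemiconjBy a x y) :
    b * y * a = x := by
  rw [mul_assoc, ← h.eq, ← mul_assoc, hba, one_mul]

theorem typeB_braid_of_semiconjBy {a x y x' y' : M} (ha : IsLeftRegular a)
    (hx : SemiconjBy a x x') (hy : SemiconjBy a y y')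
    (h : x' * y' * x' * y' = y' * x' * y' * x') : x * y * x * y = y * x * y * x := by
  have hxy : SemiconjBy a (x * y * x * y) (x' * y' * x' * y') :=
    ((hx.mul_right hy).mul_right hx).mul_right hy
  have hyx : SemiconjBy a (y * x * y * x) (y' * x' * y' * x') :=
    ((hy.mul_right hx).mul_right hy).mul_right hx
  exact ha (by simp only [hxy.eq, hyx.eq, h])

end Monoid

section Algebra

variable {R A : Type*} [CommRing R] [Ring A] [Algebra R A] {x : A} {z w : R}

theorem mul_sub_algebraMap_eq_one (hzw : z * w = 1)
    (hx : (x - algebraMap R A z) * (x + algebraMap R A w) = 0) :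
    x * (x - algebraMap R A (z - w)) = 1 := by
  have hconst : algebraMap R A z * algebraMap R A w = 1 := by rw [← map_mul, hzw, map_one]
  rw [sub_mul, mul_add, mul_add, hconst, Algebra.commutes z x] at hx
  rw [map_sub, mul_sub, mul_sub, ← sub_eq_zero, ← hx]
  abel

theorem quadratic_of_semiconjBy {a y : A} (ha : IsLeftRegular a) (h : SemiconjBy a x y)
    (hy : (y - algebraMap R A z) * (y + algebraMap R A w) = 0) :
    (x - algebraMap R A z) * (x + algebraMap R A w) = 0 := by
  have hscalar (c : R) : SemiconjBy a (algebraMap R A c) (algebraMap R A c) :=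
    Algebra.commute_algebraMap_right c a
  have hprod := (h.sub_right (hscalar z)).mul_right (h.add_right (hscalar w))
  exact ha (by simp only [hprod.eq, hy, zero_mul, mul_zero])

end Algebra

section Hecke

variable {k u u0 uk} {i j : ℕ}

theorem mkAlgHom_eq_of_heckeRel {x y : FA} (h : HeckeRel k u u0 uk x y) :
    (RingQuot.mkAlgHom ℂ (HeckeRel k u u0 uk) x : Hecke k u u0 uk) =
      RingQuot.mkAlgHom ℂ (HeckeRel k u u0 uk) y :=
  RingQuot.mkAlgHom_rel ℂ h

theorem T_quadratic_of_heckeRel {z w : ℂ}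
    (h : HeckeRel k u u0 uk ((g i - cst z) * (g i + cst w)) 0) :
    (T k u u0 uk i - hc k u u0 uk z) * (T k u u0 uk i + hc k u u0 uk w) = 0 := by
  have hmk := mkAlgHom_eq_of_heckeRel h
  simp only [map_mul, map_sub, map_add, map_zero, cst, AlgHom.commutes] at hmk
  exact hmk

theorem commute_T (hij : i + 2 ≤ j) (hj : j ≤ k) : Commute (T k u u0 uk i) (T k u u0 uk j) := by
  have hmk := mkAlgHom_eq_of_heckeRel (HeckeRel.comm (u := u) (u0 := u0) (uk := uk) i j
    (by omega) hj (by omega))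
  simp only [map_mul] at hmk
  exact hmk

theorem braidRelations_T : BraidRelations (T k u u0 uk) (k - 1) where
  commute _ hij hj := commute_T hij (by omega)
  braid {i} hi hik := by
    have hmk := mkAlgHom_eq_of_heckeRel (HeckeRel.braid (u := u) (u0 := u0) (uk := uk) i hi
      (show i ≤ k - 2 by omega))
    simp only [map_mul] at hmk
    exact hmk

theorem T_last_typeB_braid :
    T k u u0 uk k * T k u u0 uk (k - 1) * T k u u0 uk k * T k u u0 uk (k - 1) =
      T k u u0 uk (k - 1) * T k u u0 uk k * T k u u0 uk (k - 1) * T k u u0 uk k := by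
  have hmk := mkAlgHom_eq_of_heckeRel (HeckeRel.braidk (k := k) (u := u) (u0 := u0) (uk := uk))
  simp only [map_mul] at hmk
  exact hmk.symm

theorem T_zero_mul_Tinv_zero (hu0 : u0 ≠ 0) : T k u u0 uk 0 * Tinv k u u0 uk 0 = 1 := by
  rw [Tinv, if_pos rfl]
  exact mul_sub_algebraMap_eq_one (mul_inv_cancel₀ hu0) (T_quadratic_of_heckeRel .quad0)

theorem T_mul_Tinv (hu : u ≠ 0) (hi : 1 ≤ i) (hik : i ≤ k - 1) :
    T k u u0 uk i * Tinv k u u0 uk i = 1 := by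
  rw [Tinv, if_neg (by omega), if_neg (by omega)]
  exact mul_sub_algebraMap_eq_one (mul_inv_cancel₀ hu) (T_quadratic_of_heckeRel (.quad i hi hik))

theorem commute_T_Tinv : Commute (T k u u0 uk i) (Tinv k u u0 uk i) := by
  have hsub (z : ℂ) : Commute (T k u u0 uk i) (T k u u0 uk i - hc k u u0 uk z) :=
    (Commute.refl _).sub_right (Algebra.commute_algebraMap_right z _)
  unfold Tinv
  split_ifs with h0 hk
  · subst h0; exact hsub _
  · subst hk; exact hsub _
  · exact hsub _

theorem Tinv_mul_T (hu : u ≠ 0) (hi : 1 ≤ i) (hik : i ≤ k - 1) :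
    Tinv k u u0 uk i * T k u u0 uk i = 1 :=
  commute_T_Tinv.eq.symm.trans (T_mul_Tinv hu hi hik)

theorem W1_mul_Tinv_zero (hu0 : u0 ≠ 0) :
    W1 k u u0 uk * Tinv k u u0 uk 0 =
      ascProd (Tinv k u u0 uk) (k - 1) * T k u u0 uk k * descProd (T k u u0 uk) (k - 1) := by
  rw [W1, mul_assoc _ (T k u u0 uk 0), T_zero_mul_Tinv_zero hu0, mul_one, ascProd, descProd]

theorem semiconjBy_halfTwist_W1_mul_Tinv_zero (hu : u ≠ 0) (hu0 : u0 ≠ 0) :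
    SemiconjBy (halfTwist (T k u u0 uk) (k - 1)) (W1 k u u0 uk * Tinv k u u0 uk 0)
      (T k u u0 uk k) := by
  rw [W1_mul_Tinv_zero hu0]
  exact semiconjBy_halfTwist_ascProd_mul_mul_descProd (fun _ => T_mul_Tinv hu)
    (fun _ _ hi => commute_T (by omega) le_rfl)

theorem halfTwistInv_Tinv_mul_halfTwist_T (hu : u ≠ 0) :
    halfTwistInv (Tinv k u u0 uk) (k - 1) * halfTwist (T k u u0 uk) (k - 1) = 1 :=
  halfTwistInv_mul_halfTwist fun _ => Tinv_mul_T hu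

end Hecke

/-- properties of `T_{0^∨} = W_1 T_0⁻¹` and `T_{w_A}`. -/
theorem statement8 (k : ℕ) (hk : 2 ≤ k) (u u0 uk : ℂ)
    (hu : u ≠ 0) (hu0 : u0 ≠ 0) (huk : uk ≠ 0)
    (T0v : Hecke k u u0 uk) (hT0v : T0v = W1 k u u0 uk * Tinv k u u0 uk 0)
    (TwA : Hecke k u u0 uk)
    (hTwA : TwA = ((List.range (k-1)).map (fun m =>
        (((List.range (m+1)).reverse).map (fun j => T k u u0 uk (j+1))).prod)).prod)
    (TwAinv : Hecke k u u0 uk)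
    (hTwAinv : TwAinv = ((List.range (k-1)).reverse.map (fun m =>
        ((List.range (m+1)).map (fun j => Tinv k u u0 uk (j+1))).prod)).prod) :
    (T0v - hc k u u0 uk uk) * (T0v + hc k u u0 uk uk⁻¹) = 0 ∧
    T0v * T k u u0 uk 1 * T0v * T k u u0 uk 1
      = T k u u0 uk 1 * T0v * T k u u0 uk 1 * T0v ∧
    TwAinv * T k u u0 uk k * TwA = T0v ∧
    TwAinv * T k u u0 uk (k-1) * TwA = T k u u0 uk 1 := by
  have hA : TwA = halfTwist (T k u u0 uk) (k - 1) := hTwA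
  have hAinv : TwAinv = halfTwistInv (Tinv k u u0 uk) (k - 1) := hTwAinv
  have hinv : TwAinv * TwA = 1 := by
    rw [hA, hAinv, halfTwistInv_Tinv_mul_halfTwist_T hu]
  have hreg : IsLeftRegular TwA := isLeftRegular_of_mul_eq_one hinv
  have hT0v_conj : SemiconjBy TwA T0v (T k u u0 uk k) := by
    rw [hA, hT0v]
    exact semiconjBy_halfTwist_W1_mul_Tinv_zero hu hu0
  have hT1_conj : SemiconjBy TwA (T k u u0 uk 1) (T k u u0 uk (k - 1)) := by
    rw [hA]
    exact braidRelations_T.semiconjBy_halfTwist (by omega)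
  exact ⟨quadratic_of_semiconjBy hreg hT0v_conj (T_quadratic_of_heckeRel .quadk),
    typeB_braid_of_semiconjBy hreg hT0v_conj hT1_conj T_last_typeB_braid,
    conj_eq_of_semiconjBy hinv hT0v_conj,
    conj_eq_of_semiconjBy hinv hT1_conj⟩

end TwoBoundaryTL
end
end

section
/- In TL_k the following identity holds: e_0T_1^{−1}T_0^{−1}T_1^{−1}e_0 = −t^{−1/2}(t_0^{1/2} + t_0^{−1/2})·e_0(ae_1)e_0 − t^{−1}t_0^{1/2}·e_0². -/
noncomputable section

open scoped BigOperators

namespace TwoBoundaryTL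

variable (k : ℕ) (u u0 uk a a0 ak : ℂ)

/-!
With `X = a₀e₀ = T₀ - t₀^{1/2}` and `Y = ae₁ = T₁ - t^{1/2}` one has `T₀⁻¹ = X + t₀^{-1/2}` and
`T₁⁻¹ = Y + t^{-1/2}`. Expanding `T₁⁻¹T₀⁻¹T₁⁻¹` and reducing `Y²` and `YXY` to multiples of `Y`
gives `t^{-1/2}(t₀^{1/2} + t₀^{-1/2})Y + t^{-1/2}(XY + YX) + t⁻¹T₀⁻¹`. Now multiply by `e₀` on both
sides: `e₀` absorbs `X` with eigenvalue `-(t₀^{1/2} + t₀^{-1/2})`, hence `T₀⁻¹` with eigenvalue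
`-t₀^{1/2}`, so the terms in `Y`, `XY` and `YX` contribute `1 - 1 - 1 = -1` times
`t^{-1/2}(t₀^{1/2} + t₀^{-1/2})e₀Ye₀`.
-/

section Algebra

variable {R A : Type*} [CommRing R] [Ring A] [Algebra R A] {S x X Y : A} {p q p₀ q₀ : R}

theorem sub_mul_self_of_quadratic
    (h : (S - algebraMap R A p) * (S + algebraMap R A q) = 0) :
    (S - algebraMap R A p) * (S - algebraMap R A p) = (-(p + q)) • (S - algebraMap R A p) := by
  have sub_eq : S - algebraMap R A p = (S + algebraMap R A q) - algebraMap R A (p + q) := by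
    rw [map_add]
    abel
  nth_rw 2 [sub_eq]
  rw [mul_sub, h, zero_sub, ← Algebra.commutes, ← Algebra.smul_def, neg_smul]

theorem smul_inv_smul_mul_inv_smul {K B : Type*} [Field K] [Ring B] [Algebra K B] {b : B} {r : K}
    (h : b * b = r • b) (c : K) : c • ((c⁻¹ • b) * (c⁻¹ • b)) = r • c⁻¹ • b := by
  have scalar_eq : c * (c⁻¹ * c⁻¹) = c⁻¹ := by
    rw [mul_left_comm, ← mul_assoc]
    simpa only [inv_inv] using mul_inv_mul_cancel c⁻¹
  rw [smul_mul_smul_comm, h, smul_smul, smul_comm, scalar_eq]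

theorem add_mul_add_mul_add_of_temperleyLieb (hY : Y * Y = (-(p + q)) • Y)
    (hYXY : Y * X * Y = (q₀ * p + p₀ * q) • Y) :
    (Y + algebraMap R A q) * (X + algebraMap R A q₀) * (Y + algebraMap R A q) =
      (q * (p₀ + q₀)) • Y + q • (X * Y + Y * X) + q ^ 2 • (X + algebraMap R A q₀) := by
  simp only [Algebra.algebraMap_eq_smul_one, mul_add, add_mul, smul_mul_assoc, mul_smul_comm,
    one_mul, mul_one, hY, hYXY]
  module

theorem mul_add_mul_add_mul_add_mul_of_temperleyLieb (hxX : x * X = (-(p₀ + q₀)) • x)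
    (hXx : X * x = (-(p₀ + q₀)) • x) (hY : Y * Y = (-(p + q)) • Y)
    (hYXY : Y * X * Y = (q₀ * p + p₀ * q) • Y) :
    x * ((Y + algebraMap R A q) * (X + algebraMap R A q₀) * (Y + algebraMap R A q)) * x =
      (-(q * (p₀ + q₀))) • (x * Y * x) - (q ^ 2 * p₀) • (x * x) := by
  have left_absorb : x * (X * Y) * x = (-(p₀ + q₀)) • (x * Y * x) := by
    rw [← mul_assoc, hxX, smul_mul_assoc, smul_mul_assoc]
  have right_absorb : x * (Y * X) * x = (-(p₀ + q₀)) • (x * Y * x) := by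
    rw [← mul_assoc, mul_assoc _ X, hXx, mul_smul_comm]
  have inv_absorb : x * (X + algebraMap R A q₀) * x = (-p₀) • (x * x) := by
    rw [mul_add, hxX, ← Algebra.commutes, ← Algebra.smul_def, ← add_smul, smul_mul_assoc]
    congr 1
    ring
  rw [add_mul_add_mul_add_of_temperleyLieb hY hYXY]
  simp only [mul_add x (_ + _), mul_add x (_ • _), add_mul _ _ x, mul_smul_comm,
    smul_mul_assoc, smul_add q, left_absorb, right_absorb, inv_absorb]
  module

end Algebra

section TemperleyLieb

variable {i : ℕ}

theorem T_zero_sub_mul_T_zero_add :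
    (T k u u0 uk 0 - algebraMap ℂ _ u0) * (T k u u0 uk 0 + algebraMap ℂ _ u0⁻¹) = 0 := by
  have h := RingQuot.mkAlgHom_rel ℂ (HeckeRel.quad0 (k := k) (u := u) (u0 := u0) (uk := uk))
  rw [map_mul, map_sub, map_add, cst, cst, AlgHom.commutes, AlgHom.commutes, map_zero] at h
  exact h

theorem T_sub_mul_T_add (hi : 1 ≤ i) (hik : i < k) :
    (T k u u0 uk i - algebraMap ℂ _ u) * (T k u u0 uk i + algebraMap ℂ _ u⁻¹) = 0 := by
  have h := RingQuot.mkAlgHom_rel ℂ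
    (HeckeRel.quad (k := k) (u := u) (u0 := u0) (uk := uk) i hi (Nat.le_sub_one_of_lt hik))
  rw [map_mul, map_sub, map_add, cst, cst, AlgHom.commutes, AlgHom.commutes, map_zero] at h
  exact h

theorem e_zero : e k u u0 uk a a0 ak 0 = a0⁻¹ • (T k u u0 uk 0 - algebraMap ℂ _ u0) :=
  if_pos rfl

theorem e_of_lt (hi : 1 ≤ i) (hik : i < k) :
    e k u u0 uk a a0 ak i = a⁻¹ • (T k u u0 uk i - algebraMap ℂ _ u) := by
  rw [e, if_neg (Nat.ne_of_gt hi), if_neg hik.ne, hc]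

theorem smul_e_zero_mul_self :
    a0 • (e k u u0 uk a a0 ak 0 * e k u u0 uk a a0 ak 0) =
      (-(u0 + u0⁻¹)) • e k u u0 uk a a0 ak 0 := by
  rw [e_zero]
  exact smul_inv_smul_mul_inv_smul (sub_mul_self_of_quadratic (T_zero_sub_mul_T_zero_add ..)) a0

theorem smul_e_mul_self (hi : 1 ≤ i) (hik : i < k) :
    a • (e k u u0 uk a a0 ak i * e k u u0 uk a a0 ak i) =
      (-(u + u⁻¹)) • e k u u0 uk a a0 ak i := by
  rw [e_of_lt (hi := hi) (hik := hik)]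
  exact smul_inv_smul_mul_inv_smul (sub_mul_self_of_quadratic (T_sub_mul_T_add k u u0 uk hi hik)) a

theorem Tinv_zero (ha0 : a0 ≠ 0) :
    Tinv k u u0 uk 0 = a0 • e k u u0 uk a a0 ak 0 + algebraMap ℂ _ u0⁻¹ := by
  rw [e_zero, smul_inv_smul₀ ha0, Tinv, if_pos rfl, hc, map_sub]
  abel

theorem Tinv_of_lt (hi : 1 ≤ i) (hik : i < k) (ha : a ≠ 0) :
    Tinv k u u0 uk i = a • e k u u0 uk a a0 ak i + algebraMap ℂ _ u⁻¹ := by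
  rw [e_of_lt (hi := hi) (hik := hik), smul_inv_smul₀ ha, Tinv, if_neg (Nat.ne_of_gt hi),
    if_neg hik.ne, hc, map_sub]
  abel

theorem π_smul_e_one_mul_smul_e_zero_mul_smul_e_one :
    π k u u0 uk a a0 ak ((a • e k u u0 uk a a0 ak 1) * (a0 • e k u u0 uk a a0 ak 0) *
        (a • e k u u0 uk a a0 ak 1)) =
      (u0⁻¹ * u + u0 * u⁻¹) • π k u u0 uk a a0 ak (a • e k u u0 uk a a0 ak 1) := by
  have h : π k u u0 uk a a0 ak _ = π k u u0 uk a a0 ak _ := RingQuot.mkAlgHom_rel ℂ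
    (TLRel.bd0 (k := k) (u := u) (u0 := u0) (uk := uk) (a := a) (a0 := a0) (ak := ak))
  rw [map_sub, map_zero, sub_eq_zero] at h
  rw [smul_mul_smul_comm, smul_mul_smul_comm, ← map_smul, smul_smul]
  convert h using 3 <;> ring

end TemperleyLieb

/-- the identity
`e_0 T_1⁻¹ T_0⁻¹ T_1⁻¹ e_0 = -t^{-1/2}(t_0^{1/2}+t_0^{-1/2}) e_0 (ae_1) e_0 - t⁻¹ t_0^{1/2} e_0²`
in `TL_k`. -/
theorem statement15 (k : ℕ) (hk : 2 ≤ k) (u u0 uk a a0 ak : ℂ)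
    (hu : u ≠ 0) (hu0 : u0 ≠ 0) (huk : uk ≠ 0) (ha : a ≠ 0) (ha0 : a0 ≠ 0) (hak : ak ≠ 0) :
    π k u u0 uk a a0 ak (e k u u0 uk a a0 ak 0 * Tinv k u u0 uk 1 * Tinv k u u0 uk 0 *
        Tinv k u u0 uk 1 * e k u u0 uk a a0 ak 0)
      = (-(u⁻¹ * (u0 + u0⁻¹))) • π k u u0 uk a a0 ak
          (e k u u0 uk a a0 ak 0 * (a • e k u u0 uk a a0 ak 1) * e k u u0 uk a a0 ak 0)
        - ((u ^ 2)⁻¹ * u0) • π k u u0 uk a a0 ak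
          (e k u u0 uk a a0 ak 0 * e k u u0 uk a a0 ak 0) := by
  have e₀_sq := congrArg (π k u u0 uk a a0 ak) (smul_e_zero_mul_self k u u0 uk a a0 ak)
  have e₁_sq := congrArg (π k u u0 uk a a0 ak) (smul_e_mul_self k u u0 uk a a0 ak le_rfl hk)
  have e₁_e₀_e₁ := π_smul_e_one_mul_smul_e_zero_mul_smul_e_one k u u0 uk a a0 ak
  rw [Tinv_zero k u u0 uk a a0 ak ha0, Tinv_of_lt k u u0 uk a a0 ak le_rfl hk ha, ← inv_pow,
    mul_assoc (e ..), mul_assoc (e ..)]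
  simp only [map_mul, map_add, map_smul, AlgHom.commutes] at e₀_sq e₁_sq e₁_e₀_e₁ ⊢
  apply mul_add_mul_add_mul_add_mul_of_temperleyLieb
  · rw [mul_smul_comm, e₀_sq]
  · rw [smul_mul_assoc, e₀_sq]
  · rw [smul_mul_assoc, mul_smul_comm, e₁_sq, smul_comm]
  · exact e₁_e₀_e₁

end TwoBoundaryTL
end
end
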